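/- arXiv:1406.6041 — 3 statements merged into one kernel-verified Lean document; each statement's English description precedes it below -/
import Mathlib

section
/- Let α be a simple root and let β be a positive root which is not simple, such that α+β is not a root. Then there exists no simple root α' ≠ α such that (α+β)−α' is a root. -/
/-!
Write `γ = β + α - α'` and suppose `γ` is a root. Since `γ + α' = α + β` is not a root,
`⟨α'^∨, γ⟩ ≥ 0`, while `⟨α'^∨, α⟩ ≤ 0` because `α` and `α'` are distinct simple roots. Hence
`⟨α'^∨, β⟩ = ⟨α'^∨, γ⟩ - ⟨α'^∨, α⟩ + 2` is positive, so `β - α'` is a root. By Geck's Lemma 2.5 (b)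
(`RootPairing.Base.root_add_root_mem_of_mem_of_mem`), if both `β - α'` and `β + α - α'` are roots
then so is `β + α`, a contradiction.
-/

open scoped RealInnerProductSpace

/-- The Cartan pairing `⟨α^∨, x⟩ = 2(α,x)/(α,α)`. -/
noncomputable def cpair {V : Type*} [NormedAddCommGroup V] [InnerProductSpace ℝ V]
    (α x : V) : ℝ :=
  2 * ⟪α, x⟫ / ⟪α, α⟫

/-- A finite reduced crystallographic root system `Φ` in `V`, together with a fixed base `S`
(the set of simple roots): every root is a nonnegative or nonpositive integer combination of
simple roots. -/
structure BasedRootSystem (V : Type*) [NormedAddCommGroup V] [InnerProductSpace ℝ V] where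
  Φ : Set V
  S : Set V
  finite : Φ.Finite
  ne_zero : ∀ α ∈ Φ, α ≠ 0
  neg_mem : ∀ α ∈ Φ, -α ∈ Φ
  reflect_mem : ∀ α ∈ Φ, ∀ β ∈ Φ, β - cpair α β • α ∈ Φ
  pairing_int : ∀ α ∈ Φ, ∀ β ∈ Φ, ∃ n : ℤ, cpair α β = n
  reduced : ∀ α ∈ Φ, ∀ t : ℝ, t • α ∈ Φ → t = 1 ∨ t = -1
  base_subset : S ⊆ Φ
  base_indep : LinearIndependent ℝ ((↑) : S → V)
  pos_or_neg : ∀ β ∈ Φ,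
      (∃ (t : Finset V) (c : V → ℕ), ↑t ⊆ S ∧ β = ∑ s ∈ t, (c s : ℝ) • s) ∨
      (∃ (t : Finset V) (c : V → ℕ), ↑t ⊆ S ∧ -β = ∑ s ∈ t, (c s : ℝ) • s)

/-- `β` is a positive root: a root which is a nonnegative integer combination of the
simple roots. -/
def BasedRootSystem.IsPositiveRoot {V : Type*} [NormedAddCommGroup V] [InnerProductSpace ℝ V]
    (R : BasedRootSystem V) (β : V) : Prop :=
  β ∈ R.Φ ∧ ∃ (t : Finset V) (c : V → ℕ), ↑t ⊆ R.S ∧ β = ∑ s ∈ t, (c s : ℝ) • s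

section RootPairing

open RootPairing Set

lemma root_add_root_sub_root_notMem_range {ι 𝕜 M N : Type*} [Finite ι] [CommRing 𝕜] [CharZero 𝕜]
    [IsDomain 𝕜] [AddCommGroup M] [Module 𝕜 M] [AddCommGroup N] [Module 𝕜 N]
    {P : RootPairing ι 𝕜 M N} [P.IsCrystallographic] (b : P.Base) {i j k : ι}
    (hi : i ∈ b.support) (hj : j ∈ b.support) (hij : i ≠ j) (hkj : k ≠ j)
    (hki : P.root k ≠ -P.root i) (hadd : P.root k + P.root i ∉ range P.root) :
    P.root k + P.root i - P.root j ∉ range P.root := by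
  rintro ⟨l, hl⟩
  have hsum : P.root l + P.root j = P.root k + P.root i := by rw [hl, sub_add_cancel]
  have hlj_nonneg : 0 ≤ P.pairingIn ℤ l j := by
    by_contra! hneg
    refine hadd (hsum ▸ P.root_add_root_mem_of_pairingIn_neg hneg fun hlj ↦ hki ?_)
    rwa [hlj, neg_add_cancel, eq_comm, add_eq_zero_iff_eq_neg] at hsum
  have hij_nonpos : P.pairingIn ℤ i j ≤ 0 := b.pairingIn_le_zero_of_ne hij hi hj
  have hpairing : P.pairingIn ℤ l j + 2 = P.pairingIn ℤ k j + P.pairingIn ℤ i j := by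
    apply FaithfulSMul.algebraMap_injective ℤ 𝕜
    simp only [map_add, P.algebraMap_pairingIn ℤ, map_ofNat]
    simpa using congrArg (P.coroot' j) hsum
  have hsub : P.root k - P.root j ∈ range P.root :=
    P.root_sub_root_mem_of_pairingIn_pos (by lia) hkj
  exact hadd (b.root_add_root_mem_of_mem_of_mem i j k hij hi hj ⟨l, hl⟩ hki hsub)

end RootPairing

lemma sum_natCast_smul_mem_closure {𝕜 M : Type*} [Semiring 𝕜] [AddCommMonoid M] [Module 𝕜 M]
    {S : Set M} {t : Finset M} (c : M → ℕ) (ht : ↑t ⊆ S) :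
    ∑ s ∈ t, (c s : 𝕜) • s ∈ AddSubmonoid.closure S := by
  refine sum_mem fun s hs ↦ ?_
  rw [Nat.cast_smul_eq_nsmul]
  exact nsmul_mem (AddSubmonoid.subset_closure (ht hs)) _

section Coroot

variable {V : Type*} [NormedAddCommGroup V] [InnerProductSpace ℝ V]

/-- The coroot `α^∨ = 2α / (α,α)`, regarded as a vector by means of the inner product. As
`2 / 0 = 0`, the coroot of `0` is `0`. -/
noncomputable def corootVector (α : V) : V :=
  (2 / ⟪α, α⟫) • α

lemma inner_corootVector (α x : V) : ⟪x, corootVector α⟫ = cpair α x := by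
  rw [corootVector, cpair, inner_smul_right, real_inner_comm x, div_mul_eq_mul_div]

lemma cpair_self {α : V} (hα : α ≠ 0) : cpair α α = 2 :=
  mul_div_cancel_right₀ 2 (inner_self_ne_zero.2 hα)

lemma corootVector_involutive : Function.Involutive (corootVector (V := V)) := by
  intro α
  rcases eq_or_ne α 0 with rfl | hα
  · simp [corootVector]
  · have : ⟪α, α⟫ ≠ 0 := inner_self_ne_zero.2 hα
    simp only [corootVector, inner_smul_left, inner_smul_right, smul_smul, conj_trivial]
    rw [show 2 / (2 / ⟪α, α⟫ * (2 / ⟪α, α⟫ * ⟪α, α⟫)) * (2 / ⟪α, α⟫) = 1 by field_simp, one_smul]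

instance isPerfPair_innerₗ [FiniteDimensional ℝ V] : (innerₗ V).IsPerfPair := by
  have hinj : Function.Injective (innerₗ V) := fun x y h ↦
    ext_inner_right ℝ fun v ↦ LinearMap.congr_fun h v
  exact .of_injective hinj (by rwa [flip_innerₗ])

end Coroot

namespace BasedRootSystem

open Set Submodule

variable {V : Type*} [NormedAddCommGroup V] [InnerProductSpace ℝ V] (R : BasedRootSystem V)

instance finite_roots : Finite R.Φ := R.finite

instance finiteDimensional_span : FiniteDimensional ℝ (span ℝ R.Φ) :=
  .span_of_finite ℝ R.finite

/-- The inclusion of the roots into the space they span. -/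
def rootEmbedding : R.Φ ↪ span ℝ R.Φ :=
  ⟨inclusion subset_span, inclusion_injective _⟩

lemma range_rootEmbedding : range R.rootEmbedding = (↑) ⁻¹' R.Φ := by
  ext x
  exact ⟨by rintro ⟨i, rfl⟩; exact i.2, fun hx ↦ ⟨⟨x, hx⟩, rfl⟩⟩

lemma span_range_rootEmbedding : span ℝ (range R.rootEmbedding) = ⊤ := by
  rw [range_rootEmbedding, span_span_coe_preimage]

/-- `R` as a root pairing in Mathlib's sense. The ambient space is the span of the roots, where
they form a root system, and it is paired with itself by the inner product. -/
noncomputable def toRootPairing : RootPairing R.Φ ℝ (span ℝ R.Φ) (span ℝ R.Φ) :=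
  .mk'' (innerₗ (span ℝ R.Φ)) R.rootEmbedding
    (R.rootEmbedding.trans ⟨corootVector, corootVector_involutive.injective⟩)
    (fun i ↦ (inner_corootVector (i : V) i).trans (cpair_self (R.ne_zero i i.2)))
    (fun i ↦ by
      rw [range_rootEmbedding]
      intro x hx
      have hreflect : (x : V) - cpair (i : V) x • (i : V) ∈ R.Φ := R.reflect_mem i i.2 x hx
      rwa [← inner_corootVector] at hreflect)
    R.span_range_rootEmbedding

lemma mem_range_root {x : span ℝ R.Φ} : x ∈ range R.toRootPairing.root ↔ (x : V) ∈ R.Φ :=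
  Set.ext_iff.1 R.range_rootEmbedding x

lemma exists_int_eq_pairing (i j : R.Φ) : ∃ n : ℤ, n = R.toRootPairing.pairing i j := by
  obtain ⟨n, hn⟩ := R.pairing_int j j.2 i i.2
  exact ⟨n, hn.symm.trans (inner_corootVector (j : V) i).symm⟩

instance : R.toRootPairing.IsCrystallographic := ⟨R.exists_int_eq_pairing⟩

instance : R.toRootPairing.IsRootSystem := RootPairing.isRootSystem_mk'' R.exists_int_eq_pairing

instance : R.toRootPairing.IsReduced where
  eq_or_eq_neg i j hij := by
    rw [LinearIndependent.pair_iff' (R.toRootPairing.ne_zero i)] at hij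
    push Not at hij
    obtain ⟨a, ha⟩ := hij
    have ha_coe : a • (i : V) = j := congrArg Subtype.val ha
    rcases R.reduced i i.2 a (ha_coe ▸ j.2) with rfl | rfl
    · exact .inl (by rw [← ha, one_smul])
    · exact .inr (by rw [← ha, neg_one_smul, neg_neg])

lemma mem_closure_root_iff {x : span ℝ R.Φ} :
    x ∈ AddSubmonoid.closure (R.toRootPairing.root '' {i | (i : V) ∈ R.S}) ↔
      (x : V) ∈ AddSubmonoid.closure R.S := by
  let incl : span ℝ R.Φ →+ V := (span ℝ R.Φ).subtype
  have himage : incl '' (R.toRootPairing.root '' {i | (i : V) ∈ R.S}) = R.S := by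
    rw [image_image]
    exact (Subtype.image_preimage_coe R.Φ R.S).trans (inter_eq_right.2 R.base_subset)
  have hclosure := AddMonoidHom.map_mclosure incl (R.toRootPairing.root '' {i | (i : V) ∈ R.S})
  rw [himage] at hclosure
  rw [← hclosure]
  exact (AddSubmonoid.mem_map_iff_mem Subtype.val_injective).symm

/-- The simple roots of `R` as a base of `R.toRootPairing` in Mathlib's sense. -/
noncomputable def base : R.toRootPairing.Base :=
  .mk' _ {i | (i : V) ∈ R.S}
    (.of_comp (span ℝ R.Φ).subtype <|
      R.base_indep.comp (fun i : {i : R.Φ | (i : V) ∈ R.S} ↦ ⟨i.1.1, i.2⟩)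
        fun i j h ↦ Subtype.ext (Subtype.ext (Subtype.mk.inj h)))
    fun i ↦ by
      simp only [mem_closure_root_iff]
      rcases R.pos_or_neg i i.2 with ⟨t, c, ht, hc⟩ | ⟨t, c, ht, hc⟩
      · left
        change (i : V) ∈ _
        exact hc ▸ sum_natCast_smul_mem_closure c ht
      · right
        change -(i : V) ∈ _
        exact hc ▸ sum_natCast_smul_mem_closure c ht

lemma mem_base_support {i : R.Φ} : i ∈ R.base.support ↔ (i : V) ∈ R.S := by
  simp [base, RootPairing.Base.mk']

lemma IsPositiveRoot.ne_neg {R : BasedRootSystem V} {α β : V} (hβ : R.IsPositiveRoot β)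
    (hα : α ∈ R.S) : β ≠ -α := by
  rintro rfl
  obtain ⟨-, t, c, ht, hc⟩ := hβ
  obtain ⟨height, hheight⟩ :=
    Module.exists_dual_forall_apply_eq_one (K := ℝ) (v := id) (s := R.S) R.base_indep
  have hneg : height (-α) = -1 := by rw [map_neg]; exact congrArg _ (hheight α hα)
  have hnonneg : 0 ≤ height (-α) := by
    rw [hc, map_sum]
    refine Finset.sum_nonneg fun s hs ↦ ?_
    rw [map_smul, show height s = 1 from hheight s (ht hs)]
    positivity
  linarith

end BasedRootSystem

theorem no_simple_root_subtract_general {V : Type*} [NormedAddCommGroup V] [InnerProductSpace ℝ V]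
    (R : BasedRootSystem V) {α β : V} (hα : α ∈ R.S) (hβ : β ∈ R.Φ) (hβα : β ≠ -α)
    (hβns : β ∉ R.S) (hαβ : α + β ∉ R.Φ) :
    ¬ ∃ α' ∈ R.S, α' ≠ α ∧ (α + β) - α' ∈ R.Φ := by
  rintro ⟨α', hα', hne, hγ⟩
  let i : R.Φ := ⟨α, R.base_subset hα⟩
  let j : R.Φ := ⟨α', R.base_subset hα'⟩
  let k : R.Φ := ⟨β, hβ⟩
  have hij : i ≠ j := fun h ↦ hne (congrArg Subtype.val h).symm
  have hkj : k ≠ j := by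
    intro h
    obtain rfl : β = α' := congrArg Subtype.val h
    exact hβns hα'
  have hki : R.toRootPairing.root k ≠ -R.toRootPairing.root i := fun h ↦
    hβα (congrArg Subtype.val h)
  rw [add_comm α β] at hαβ hγ
  exact root_add_root_sub_root_notMem_range R.base (R.mem_base_support.2 hα)
    (R.mem_base_support.2 hα') hij hkj hki (R.mem_range_root.not.2 hαβ) (R.mem_range_root.2 hγ)

/-- Let `α` be a simple root and `β` a positive root which is not simple,
such that `α + β` is not a root. Then there is no simple root `α' ≠ α` such that
`(α + β) - α'` is a root. -/
theorem no_simple_root_subtract {V : Type*} [NormedAddCommGroup V] [InnerProductSpace ℝ V]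
    [FiniteDimensional ℝ V] (R : BasedRootSystem V) (α β : V)
    (hα : α ∈ R.S) (hβ : R.IsPositiveRoot β) (hβns : β ∉ R.S) (hαβ : α + β ∉ R.Φ) :
    ¬ ∃ α' ∈ R.S, α' ≠ α ∧ (α + β) - α' ∈ R.Φ :=
  no_simple_root_subtract_general R hα hβ.1 (hβ.ne_neg hα) hβns hαβ
end

section
/- If α and β are distinct simple roots, then 2α+β and α+2β cannot both be roots. -/
open scoped RealInnerProductSpace

/-!
If `m • α + β` is a root, so is its reflection in `α`, namely `-(m + ⟨α^∨, β⟩) • α + β`. The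
coefficients of a root are all `≥ 0` or all `≤ 0`, so `0 ≤ m ≤ -⟨α^∨, β⟩`; likewise
`0 ≤ n ≤ -⟨β^∨, α⟩` if `α + n • β` is a root. But `⟨α^∨, β⟩ ⟨β^∨, α⟩ = 4 cos² θ < 4` for the
angle `θ` between the linearly independent vectors `α` and `β`, so `m * n < 4`.
-/

theorem exists_dual_eq_one_of_linearIndependent {ι K V : Type*} [DivisionRing K] [AddCommGroup V]
    [Module K V] {v : ι → V} (hv : LinearIndependent K v) (i : ι) :
    ∃ f : V →ₗ[K] K, f (v i) = 1 ∧ ∀ j ≠ i, f (v j) = 0 := by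
  have hspan : v i ∉ Submodule.span K (v '' {i}ᶜ) :=
    hv.notMem_span_image (Set.notMem_compl_iff.2 rfl)
  obtain ⟨f, hf, hfi⟩ := LinearMap.exists_extend_of_notMem
    (0 : Submodule.span K (v '' {i}ᶜ) →ₗ[K] K) hspan 1
  exact ⟨f, hfi, fun j hj => LinearMap.congr_fun hf
    ⟨v j, Submodule.subset_span (Set.mem_image_of_mem v hj)⟩⟩

section CartanPairing

variable {V : Type*} [NormedAddCommGroup V] [InnerProductSpace ℝ V]

theorem cpair_smul_add {x : V} (hx : x ≠ 0) (m : ℝ) (y : V) :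
    cpair x (m • x + y) = 2 * m + cpair x y := by
  have hxx : ⟪x, x⟫ ≠ 0 := inner_self_ne_zero.2 hx
  simp only [cpair, inner_add_right, real_inner_smul_right]
  field_simp

theorem inner_mul_inner_lt_of_linearIndependent {x y : V} (h : LinearIndependent ℝ ![x, y]) :
    ⟪x, y⟫ * ⟪y, x⟫ < ⟪x, x⟫ * ⟪y, y⟫ := by
  have hdet := (Matrix.posDef_gram_of_linearIndependent h).det_pos
  simpa [Matrix.det_fin_two, Matrix.gram_apply] using hdet

theorem cpair_mul_cpair_lt_four {x y : V} (h : LinearIndependent ℝ ![x, y]) :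
    cpair x y * cpair y x < 4 := by
  have hx : 0 < ⟪x, x⟫ := real_inner_self_pos.2 (h.ne_zero 0)
  have hy : 0 < ⟪y, y⟫ := real_inner_self_pos.2 (h.ne_zero 1)
  rw [cpair, cpair, div_mul_div_comm, div_lt_iff₀ (mul_pos hx hy)]
  linarith [inner_mul_inner_lt_of_linearIndependent h]

end CartanPairing

namespace BasedRootSystem

variable {V : Type*} [NormedAddCommGroup V] [InnerProductSpace ℝ V] {R : BasedRootSystem V}

theorem isPositiveRoot_or_isPositiveRoot_neg {γ : V} (hγ : γ ∈ R.Φ) :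
    R.IsPositiveRoot γ ∨ R.IsPositiveRoot (-γ) :=
  (R.pos_or_neg γ hγ).imp (⟨hγ, ·⟩) (⟨R.neg_mem γ hγ, ·⟩)

theorem IsPositiveRoot.map_nonneg {γ : V} (hγ : R.IsPositiveRoot γ) {f : V →ₗ[ℝ] ℝ}
    (hf : ∀ s ∈ R.S, 0 ≤ f s) : 0 ≤ f γ := by
  obtain ⟨-, t, c, ht, rfl⟩ := hγ
  simp only [map_sum, map_smul, smul_eq_mul]
  exact Finset.sum_nonneg fun s hs => mul_nonneg (Nat.cast_nonneg _) (hf s (ht hs))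

theorem map_mul_map_nonneg {γ : V} (hγ : γ ∈ R.Φ) {f g : V →ₗ[ℝ] ℝ}
    (hf : ∀ s ∈ R.S, 0 ≤ f s) (hg : ∀ s ∈ R.S, 0 ≤ g s) : 0 ≤ f γ * g γ := by
  rcases isPositiveRoot_or_isPositiveRoot_neg hγ with hpos | hneg
  · exact mul_nonneg (hpos.map_nonneg hf) (hpos.map_nonneg hg)
  · simpa only [map_neg, neg_mul_neg] using mul_nonneg (hneg.map_nonneg hf) (hneg.map_nonneg hg)

theorem exists_coord {α : V} (hα : α ∈ R.S) :
    ∃ f : V →ₗ[ℝ] ℝ, f α = 1 ∧ (∀ s ∈ R.S, s ≠ α → f s = 0) ∧ ∀ s ∈ R.S, 0 ≤ f s := by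
  obtain ⟨f, hfα, hf⟩ := exists_dual_eq_one_of_linearIndependent R.base_indep ⟨α, hα⟩
  have hf_zero : ∀ s ∈ R.S, s ≠ α → f s = 0 := fun s hs hsα =>
    hf ⟨s, hs⟩ (Subtype.coe_ne_coe.1 hsα)
  refine ⟨f, hfα, hf_zero, fun s hs => ?_⟩
  rcases eq_or_ne s α with rfl | hsα
  · exact hfα ▸ zero_le_one
  · exact (hf_zero s hs hsα).ge

variable {α β : V}

theorem linearIndependent_pair (hα : α ∈ R.S) (hβ : β ∈ R.S) (hne : α ≠ β) :
    LinearIndependent ℝ ![α, β] := by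
  have hinj : Function.Injective ![(⟨α, hα⟩ : R.S), ⟨β, hβ⟩] :=
    injective_pair_iff_ne.2 (Subtype.coe_ne_coe.1 hne)
  convert R.base_indep.comp _ hinj using 1
  ext i
  fin_cases i <;> rfl

theorem coeff_mul_coeff_nonneg (hα : α ∈ R.S) (hβ : β ∈ R.S) (hne : α ≠ β) {a b : ℝ}
    (h : a • α + b • β ∈ R.Φ) : 0 ≤ a * b := by
  obtain ⟨f, hfα, hf, hf_nonneg⟩ := exists_coord hα
  obtain ⟨g, hgβ, hg, hg_nonneg⟩ := exists_coord hβ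
  simpa [hfα, hgβ, hf β hβ hne.symm, hg α hα hne] using map_mul_map_nonneg h hf_nonneg hg_nonneg

theorem cpair_le_neg_of_smul_add_mem (hα : α ∈ R.S) (hβ : β ∈ R.S) (hne : α ≠ β) {m : ℝ}
    (h : m • α + β ∈ R.Φ) : cpair α β ≤ -m := by
  have hαΦ : α ∈ R.Φ := R.base_subset hα
  have hrefl : (-(m + cpair α β)) • α + (1 : ℝ) • β ∈ R.Φ := by
    convert R.reflect_mem α hαΦ _ h using 1
    rw [cpair_smul_add (R.ne_zero α hαΦ)]
    module
  linarith [coeff_mul_coeff_nonneg hα hβ hne hrefl]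

end BasedRootSystem

open BasedRootSystem in
theorem not_both_two_smul_add_general {V : Type*} [NormedAddCommGroup V] [InnerProductSpace ℝ V]
    (R : BasedRootSystem V) {α β : V} (hα : α ∈ R.S) (hβ : β ∈ R.S) (hne : α ≠ β)
    {m n : ℝ} (hmn : 4 ≤ m * n) : ¬ (m • α + β ∈ R.Φ ∧ α + n • β ∈ R.Φ) := by
  rintro ⟨hm, hn⟩
  have hm_nonneg : 0 ≤ m := by
    simpa using coeff_mul_coeff_nonneg hα hβ hne (b := 1) (by simpa using hm)
  have hn_nonneg : 0 ≤ n := by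
    simpa using coeff_mul_coeff_nonneg hα hβ hne (a := 1) (by simpa using hn)
  have hαβ : m ≤ -cpair α β := le_neg_of_le_neg (cpair_le_neg_of_smul_add_mem hα hβ hne hm)
  have hβα : n ≤ -cpair β α :=
    le_neg_of_le_neg (cpair_le_neg_of_smul_add_mem hβ hα hne.symm (add_comm α _ ▸ hn))
  have hlt : m * n < 4 := calc
    m * n ≤ -cpair α β * -cpair β α :=
      mul_le_mul hαβ hβα hn_nonneg (hm_nonneg.trans hαβ)
    _ = cpair α β * cpair β α := neg_mul_neg _ _
    _ < 4 := cpair_mul_cpair_lt_four (linearIndependent_pair hα hβ hne)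
  exact hlt.not_ge hmn

/-- If `α` and `β` are distinct simple roots, then `2α + β` and `α + 2β`
cannot both be roots. -/
theorem not_both_two_smul_add {V : Type*} [NormedAddCommGroup V] [InnerProductSpace ℝ V]
    [FiniteDimensional ℝ V] (R : BasedRootSystem V) (α β : V)
    (hα : α ∈ R.S) (hβ : β ∈ R.S) (hne : α ≠ β) :
    ¬ ((2 : ℝ) • α + β ∈ R.Φ ∧ α + (2 : ℝ) • β ∈ R.Φ) :=
  not_both_two_smul_add_general R hα hβ hne (by norm_num)
end

section
/- If α1 and α2 are orthogonal simple roots (i.e. ⟨α1^∨, α2⟩ = 0) and γ is a root such that both γ−α1 and γ−α2 are roots, then γ−α1−α2 is also a root. -/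
open scoped RealInnerProductSpace

/-!
If `α` and `β` are distinct roots and `α - β` is not a root, then `(α, β) ≤ 0`, because the
difference of two distinct roots at an acute angle is a root. If `(γ, β) > 0`, then
`(γ - α, β) > 0` as well, so `γ - α - β` is a root unless `γ = α + β`; symmetrically if
`(γ, α) > 0`. Otherwise `⟨γ^∨, γ - α⟩ ≥ 2`, so `⟨(γ - α)^∨, γ⟩ = 1`, which says that `α` and `γ`
have the same length, and so do `β` and `γ`. This gives `(α + β, α + β) ≤ 2 (γ - α, γ - β)`, whose
right side is nonpositive since `(γ - α) - (γ - β) = β - α` is not a root; hence `α + β = 0`.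

The difference of two simple roots is not a root because its height is `0`. If the two are
orthogonal, reflecting their sum in one of them shows that the sum is not a root either.
-/

lemma sum_smul_eq_zero_of_map_eq_zero {ι K M : Type*} [CommRing K] [LinearOrder K]
    [IsStrictOrderedRing K] [AddCommGroup M] [Module K M] {f : Module.Dual K M} {v : ι → M}
    {t : Finset ι} {c : ι → K} (hf : ∀ i ∈ t, 0 < f (v i)) (hc : ∀ i ∈ t, 0 ≤ c i)
    (h : f (∑ i ∈ t, c i • v i) = 0) : ∑ i ∈ t, c i • v i = 0 := by
  simp only [map_sum, map_smul, smul_eq_mul] at h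
  rw [Finset.sum_eq_zero_iff_of_nonneg fun i hi ↦ mul_nonneg (hc i hi) (hf i hi).le] at h
  refine Finset.sum_eq_zero fun i hi ↦ ?_
  rw [(mul_eq_zero_iff_right (hf i hi).ne').mp (h i hi), zero_smul]

section Cpair

variable {V : Type*} [NormedAddCommGroup V] [InnerProductSpace ℝ V]

lemma cpair_mul_inner_self {x : V} (hx : x ≠ 0) (y : V) : cpair x y * ⟪x, x⟫ = 2 * ⟪x, y⟫ :=
  div_mul_cancel₀ _ (inner_self_ne_zero.mpr hx)

lemma cpair_self_s4 {x : V} (hx : x ≠ 0) : cpair x x = 2 :=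
  mul_div_cancel_right₀ 2 (inner_self_ne_zero.mpr hx)

lemma cpair_add (x y z : V) : cpair x (y + z) = cpair x y + cpair x z := by
  simp only [cpair, inner_add_right, mul_add, add_div]

lemma inner_self_le_inner_of_two_le_cpair {x y : V} (hx : x ≠ 0) (h : 2 ≤ cpair x y) :
    ⟪x, x⟫ ≤ ⟪x, y⟫ := by
  have hmul := mul_le_mul_of_nonneg_right h (real_inner_self_pos.mpr hx).le
  rw [cpair_mul_inner_self hx] at hmul
  linarith

lemma ne_of_cpair_eq_zero {x y : V} (hx : x ≠ 0) (h : cpair x y = 0) : x ≠ y := by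
  rintro rfl
  exact two_ne_zero ((cpair_self_s4 hx).symm.trans h)

end Cpair

namespace BasedRootSystem

variable {V : Type*} [NormedAddCommGroup V] [InnerProductSpace ℝ V] (R : BasedRootSystem V)
  {α β γ : V}

lemma sub_mem_comm : α - β ∈ R.Φ ↔ β - α ∈ R.Φ :=
  ⟨fun h ↦ by simpa using R.neg_mem _ h, fun h ↦ by simpa using R.neg_mem _ h⟩

lemma inner_self_pos (hα : α ∈ R.Φ) : 0 < ⟪α, α⟫ :=
  real_inner_self_pos.mpr (R.ne_zero α hα)

lemma cpair_eq_one_or_two_le (hα : α ∈ R.Φ) (hβ : β ∈ R.Φ) (h : 0 < ⟪α, β⟫) :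
    cpair α β = 1 ∨ 2 ≤ cpair α β := by
  have hpos : 0 < cpair α β := div_pos (mul_pos two_pos h) (R.inner_self_pos hα)
  obtain ⟨n, hn⟩ := R.pairing_int α hα β hβ
  rw [hn] at hpos ⊢
  norm_cast at hpos ⊢
  lia

lemma cpair_eq_one_or_cpair_eq_one (hα : α ∈ R.Φ) (hβ : β ∈ R.Φ) (hne : α ≠ β)
    (h : 0 < ⟪α, β⟫) : cpair α β = 1 ∨ cpair β α = 1 := by
  rcases R.cpair_eq_one_or_two_le hα hβ h with hαβ | hαβ
  · exact .inl hαβ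
  rcases R.cpair_eq_one_or_two_le hβ hα (by rwa [real_inner_comm]) with hβα | hβα
  · exact .inr hβα
  have hαα := inner_self_le_inner_of_two_le_cpair (R.ne_zero α hα) hαβ
  have hββ := inner_self_le_inner_of_two_le_cpair (R.ne_zero β hβ) hβα
  have hdist : 0 < ⟪α - β, α - β⟫ := real_inner_self_pos.mpr (sub_ne_zero.mpr hne)
  rw [real_inner_sub_sub_self] at hdist
  rw [real_inner_comm α β] at hββ
  linarith

lemma sub_mem_of_inner_pos (hα : α ∈ R.Φ) (hβ : β ∈ R.Φ) (hne : α ≠ β) (h : 0 < ⟪α, β⟫) :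
    α - β ∈ R.Φ := by
  rcases R.cpair_eq_one_or_cpair_eq_one hα hβ hne h with hαβ | hβα
  · exact R.sub_mem_comm.mp (by simpa [hαβ] using R.reflect_mem α hα β hβ)
  · simpa [hβα] using R.reflect_mem β hβ α hα

lemma inner_nonpos_of_sub_notMem (hα : α ∈ R.Φ) (hβ : β ∈ R.Φ) (hne : α ≠ β)
    (hsub : α - β ∉ R.Φ) : ⟪α, β⟫ ≤ 0 :=
  not_lt.mp fun h ↦ hsub (R.sub_mem_of_inner_pos hα hβ hne h)

lemma sub_sub_mem_of_inner_pos (hβ : β ∈ R.Φ) (hsub : γ - α ∈ R.Φ) (hne : γ ≠ α + β)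
    (hαβ : ⟪α, β⟫ ≤ 0) (hγβ : 0 < ⟪γ, β⟫) : γ - α - β ∈ R.Φ := by
  refine R.sub_mem_of_inner_pos hsub hβ (fun h ↦ hne (sub_eq_iff_eq_add'.mp h)) ?_
  rw [inner_sub_left]
  linarith

lemma inner_self_eq_of_sub_mem (hγ : γ ∈ R.Φ) (hα : α ∈ R.Φ) (hsub : γ - α ∈ R.Φ)
    (h : ⟪γ, α⟫ ≤ 0) : ⟪α, α⟫ = ⟪γ, γ⟫ := by
  have hγγ := R.inner_self_pos hγ
  have hinner : ⟪γ, γ - α⟫ = ⟪γ, γ⟫ - ⟪γ, α⟫ := inner_sub_right ..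
  have hne : γ ≠ γ - α := fun heq ↦ R.ne_zero α hα (sub_eq_self.mp heq.symm)
  rcases R.cpair_eq_one_or_cpair_eq_one hγ hsub hne (by linarith) with hpair | hpair
  · have hmul := cpair_mul_inner_self (R.ne_zero γ hγ) (γ - α)
    rw [hpair] at hmul
    linarith
  · have hmul := cpair_mul_inner_self (R.ne_zero _ hsub) γ
    rw [hpair, real_inner_sub_sub_self, real_inner_comm γ (γ - α)] at hmul
    linarith

lemma inner_add_self_le_two_mul_inner_sub_sub (hα : α ∈ R.Φ) (hβ : β ∈ R.Φ) (hγ : γ ∈ R.Φ)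
    (h₁ : γ - α ∈ R.Φ) (h₂ : γ - β ∈ R.Φ) (hγα : ⟪γ, α⟫ ≤ 0) (hγβ : ⟪γ, β⟫ ≤ 0) :
    ⟪α + β, α + β⟫ ≤ 2 * ⟪γ - α, γ - β⟫ := by
  have hαα := R.inner_self_eq_of_sub_mem hγ hα h₁ hγα
  have hββ := R.inner_self_eq_of_sub_mem hγ hβ h₂ hγβ
  rw [real_inner_add_add_self, inner_sub_left, inner_sub_right, inner_sub_right,
    real_inner_comm γ α]
  linarith

lemma map_ne_zero_of_forall_simple_pos {f : Module.Dual ℝ V} (hf : ∀ s ∈ R.S, 0 < f s)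
    (hβ : β ∈ R.Φ) : f β ≠ 0 := by
  have eq_zero_of_map_eq_zero (t : Finset V) (c : V → ℕ) (ht : ↑t ⊆ R.S)
      (h : f (∑ s ∈ t, (c s : ℝ) • s) = 0) : ∑ s ∈ t, (c s : ℝ) • s = 0 :=
    sum_smul_eq_zero_of_map_eq_zero (fun s hs ↦ hf s (ht hs)) (fun s _ ↦ (c s).cast_nonneg) h
  intro hfβ
  refine R.ne_zero β hβ ?_
  rcases R.pos_or_neg β hβ with ⟨t, c, ht, hsum⟩ | ⟨t, c, ht, hsum⟩
  · rw [hsum] at hfβ ⊢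
    exact eq_zero_of_map_eq_zero t c ht hfβ
  · rw [← neg_eq_zero, ← map_neg, hsum] at hfβ
    rw [← neg_eq_zero, hsum]
    exact eq_zero_of_map_eq_zero t c ht hfβ

lemma simple_sub_simple_notMem (hα : α ∈ R.S) (hβ : β ∈ R.S) : α - β ∉ R.Φ := by
  intro hsub
  have hindep : LinearIndepOn ℝ id R.S := R.base_indep
  obtain ⟨height, height_simple⟩ := Module.exists_dual_forall_apply_eq_one hindep
  have height_pos : ∀ s ∈ R.S, 0 < height s := fun s hs ↦ one_pos.trans_eq (height_simple s hs).symm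
  refine R.map_ne_zero_of_forall_simple_pos height_pos hsub ?_
  rw [map_sub, sub_eq_zero]
  exact (height_simple α hα).trans (height_simple β hβ).symm

lemma sub_mem_of_add_mem_of_cpair_eq_zero (hα : α ∈ R.Φ) (horth : cpair α β = 0)
    (hadd : α + β ∈ R.Φ) : α - β ∈ R.Φ := by
  have hrefl : α + β - cpair α (α + β) • α = β - α := by
    rw [cpair_add, cpair_self_s4 (R.ne_zero α hα), horth]
    module
  exact R.sub_mem_comm.mp (hrefl ▸ R.reflect_mem α hα _ hadd)

lemma simple_add_simple_notMem (hα : α ∈ R.S) (hβ : β ∈ R.S) (horth : cpair α β = 0) :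
    α + β ∉ R.Φ := fun hadd ↦
  R.simple_sub_simple_notMem hα hβ
    (R.sub_mem_of_add_mem_of_cpair_eq_zero (R.base_subset hα) horth hadd)

end BasedRootSystem

theorem sub_two_orthogonal_simples_general {V : Type*} [NormedAddCommGroup V]
    [InnerProductSpace ℝ V] (R : BasedRootSystem V) {α β γ : V} (hα : α ∈ R.Φ) (hβ : β ∈ R.Φ)
    (hγ : γ ∈ R.Φ) (hne : α ≠ β) (hsub : α - β ∉ R.Φ) (hγ_ne : γ ≠ α + β)
    (h₁ : γ - α ∈ R.Φ) (h₂ : γ - β ∈ R.Φ) : γ - α - β ∈ R.Φ := by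
  have hαβ : ⟪α, β⟫ ≤ 0 := R.inner_nonpos_of_sub_notMem hα hβ hne hsub
  rcases lt_or_ge 0 ⟪γ, β⟫ with hγβ | hγβ
  · exact R.sub_sub_mem_of_inner_pos hβ h₁ hγ_ne hαβ hγβ
  rcases lt_or_ge 0 ⟪γ, α⟫ with hγα | hγα
  · rw [sub_right_comm]
    exact R.sub_sub_mem_of_inner_pos hα h₂ (add_comm α β ▸ hγ_ne) (by rwa [real_inner_comm]) hγα
  have hinner : ⟪γ - α, γ - β⟫ ≤ 0 := by
    refine R.inner_nonpos_of_sub_notMem h₁ h₂ (fun h ↦ hne (sub_right_injective h)) ?_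
    rwa [sub_sub_sub_cancel_left, R.sub_mem_comm]
  have hle := R.inner_add_self_le_two_mul_inner_sub_sub hα hβ hγ h₁ h₂ hγα hγβ
  have hadd : α + β = 0 := real_inner_self_nonpos.mp (by linarith)
  rwa [sub_sub, hadd, sub_zero]

/-- If `α₁` and `α₂` are orthogonal simple roots and `γ` is a root such that
both `γ - α₁` and `γ - α₂` are roots, then `γ - α₁ - α₂` is also a root. -/
theorem sub_two_orthogonal_simples {V : Type*} [NormedAddCommGroup V] [InnerProductSpace ℝ V]
    [FiniteDimensional ℝ V] (R : BasedRootSystem V) (α₁ α₂ γ : V)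
    (hα₁ : α₁ ∈ R.S) (hα₂ : α₂ ∈ R.S) (horth : cpair α₁ α₂ = 0) (hγ : γ ∈ R.Φ)
    (h₁ : γ - α₁ ∈ R.Φ) (h₂ : γ - α₂ ∈ R.Φ) :
    γ - α₁ - α₂ ∈ R.Φ := by
  have hne : α₁ ≠ α₂ := ne_of_cpair_eq_zero (R.ne_zero α₁ (R.base_subset hα₁)) horth
  have hγ_ne : γ ≠ α₁ + α₂ := fun h ↦ R.simple_add_simple_notMem hα₁ hα₂ horth (h ▸ hγ)
  exact sub_two_orthogonal_simples_general R (R.base_subset hα₁) (R.base_subset hα₂) hγ hne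
    (R.simple_sub_simple_notMem hα₁ hα₂) hγ_ne h₁ h₂
end
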